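/- arXiv:1012.3271 — 7 statements merged into one kernel-verified Lean document; each statement's English description precedes it below -/
import Mathlib

section
/- Let f ∈ ℝ[x₁,…,xₙ] and let d be such that 2d ≥ deg f. Then there exists a nonnegative vector λ* = (λ*₀, λ*₁, …, λ*ₙ) ∈ ℝ₊^{n+1} such that the polynomial g(x) = f(x) + λ*₀ + Σ_{i=1}^n λ*ᵢ xᵢ^{2d} is a sum of squares of polynomials of degree at most d, and ‖f − g‖₁ = Σ_{i=0}^n λ*ᵢ = ρ_d(f); that is, g is a best ℓ₁-norm approximation of f by a sum of squares of degree at most 2d. -/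
open MvPolynomial Finset

/-- The ℓ₁-norm of the coefficient vector of a polynomial. -/
noncomputable def l1Norm {n : ℕ} (f : MvPolynomial (Fin n) ℝ) : ℝ :=
  ∑ α ∈ f.support, |f.coeff α|

/-- `IsSOS d g` : `g` is a sum of squares of polynomials of degree at most `d`
(i.e. `g ∈ Σ[x]_d`). -/
def IsSOS {n : ℕ} (d : ℕ) (g : MvPolynomial (Fin n) ℝ) : Prop :=
  ∃ (k : ℕ) (h : Fin k → MvPolynomial (Fin n) ℝ),
    (∀ i, (h i).totalDegree ≤ d) ∧ g = ∑ i, (h i) ^ 2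

/-- `rho d f = inf {‖f - g‖₁ : g ∈ Σ[x]_d}`. -/
noncomputable def rho {n : ℕ} (d : ℕ) (f : MvPolynomial (Fin n) ℝ) : ℝ :=
  sInf {r : ℝ | ∃ g, IsSOS d g ∧ r = l1Norm (f - g)}

/-!
Since `g = 0` is a sum of squares, it suffices to replace any competitor `g` by one of the form
`f + l₀ + ∑ᵢ lᵢ xᵢ^{2d}` that is no further from `f`, and then to minimise `∑ᵢ lᵢ` over the closed
set of admissible `l`. The replacement adds to `g` a perturbation that makes `f - g` a sum of
squares at the cost `‖f - g‖₁`, one monomial `c x^α` at a time. With `x₀ = 1`, write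
`x^α = x^β x^γ` where `x^β` and `x^γ` have degree `d` in `x₀, …, xₙ`; then
`|c| (x^{2β} + x^{2γ}) + 2 c x^β x^γ` is `|c|` times a square, and `∑ᵢ βᵢ xᵢ^{2d} - d x^{2β}` is a
sum of squares, by an arithmetic-geometric mean inequality with a sum of squares certificate.
Hence `c x^α + ∑ᵢ lᵢ xᵢ^{2d}` is a sum of squares for `lᵢ = |c| (βᵢ + γᵢ) / (2d)`, and these weights
add up to `|c|`.

The cone is closed because Gram matrices bound the number of squares needed by the dimension `N` of
the space of polynomials, so that the cone is the image of the proper map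
`(h₁, …, h_N) ↦ ∑ᵢ hᵢ²`.
-/

section SumsOfSquares

theorem sum_sq_eq_sum_transpose_mul {R A κ ι : Type*} [CommSemiring R]
    [CommSemiring A] [Algebra R A] [Fintype κ] [Fintype ι] (M : Matrix κ ι R) (b : ι → A) :
    ∑ t, (∑ j, M t j • b j) ^ 2 = ∑ i, ∑ j, (M.transpose * M) i j • (b i * b j) := by
  simp only [Matrix.mul_apply, Matrix.transpose_apply, pow_two, sum_mul_sum, sum_smul,
    smul_mul_smul_comm]
  rw [sum_comm]
  exact sum_congr rfl fun i _ => sum_comm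

open scoped MatrixOrder in
theorem exists_transpose_mul_self_eq {κ ι : Type*} [Fintype κ] [Fintype ι] (M : Matrix κ ι ℝ) :
    ∃ H : Matrix ι ι ℝ, H.transpose * H = M.transpose * M := by
  classical
  obtain ⟨H, hH⟩ := CStarAlgebra.nonneg_iff_eq_star_mul_self.mp
    (Matrix.posSemidef_conjTranspose_mul_self M).nonneg
  exact ⟨H, by simpa [Matrix.star_eq_conjTranspose] using hH.symm⟩

variable {A B : Type*} [CommRing A] [Algebra ℝ A] [CommRing B] [Algebra ℝ B]

/-- The cone of sums of squares of elements of a linear subspace `V` of a commutative algebra. For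
`V` the polynomials of degree at most `d` this is `Σ[x]_d`. -/
def sosCone (V : Submodule ℝ A) : PointedCone ℝ A where
  carrier := {g | ∃ (k : ℕ) (h : Fin k → V), g = ∑ i, (h i : A) ^ 2}
  zero_mem' := ⟨0, 0, by simp⟩
  add_mem' := by
    rintro _ _ ⟨k, h, rfl⟩ ⟨k', h', rfl⟩
    exact ⟨k + k', Fin.append h h', by simp [Fin.sum_univ_add]⟩
  smul_mem' := by
    rintro ⟨c, hc⟩ _ ⟨k, h, rfl⟩
    exact ⟨k, fun i => √c • h i, by simp [smul_pow, Real.sq_sqrt hc, smul_sum]⟩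

theorem sq_mem_sosCone {V : Submodule ℝ A} {v : A} (hv : v ∈ V) : v ^ 2 ∈ sosCone V :=
  ⟨1, fun _ => ⟨v, hv⟩, by simp⟩

theorem map_mem_sosCone_map_iff {φ : A →ₐ[ℝ] B} (hφ : Function.Injective φ) {V : Submodule ℝ A}
    {g : A} : φ g ∈ sosCone (V.map φ.toLinearMap) ↔ g ∈ sosCone V := by
  constructor
  · rintro ⟨k, h, hg⟩
    choose v hv hvh using fun i => (h i).2
    refine ⟨k, fun i => ⟨v i, hv i⟩, hφ ?_⟩
    simpa [← hvh] using hg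
  · rintro ⟨k, h, rfl⟩
    exact ⟨k, fun i => ⟨φ (h i), Submodule.mem_map_of_mem (h i).2⟩, by simp⟩

theorem mem_sosCone_iff_finrank {V : Submodule ℝ A} [FiniteDimensional ℝ V] {g : A} :
    g ∈ sosCone V ↔ ∃ h : Fin (Module.finrank ℝ V) → V, g = ∑ i, (h i : A) ^ 2 := by
  refine ⟨?_, fun ⟨h, hg⟩ => ⟨_, h, hg⟩⟩
  rintro ⟨k, h, rfl⟩
  let b := Module.finBasis ℝ V
  let M : Matrix (Fin k) (Fin (Module.finrank ℝ V)) ℝ := .of fun t j => b.repr (h t) j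
  have h_eq (t) : (h t : A) = ∑ j, M t j • (b j : A) := by
    conv_lhs => rw [← b.sum_repr (h t), AddSubmonoidClass.coe_finsetSum]
    rfl
  obtain ⟨H, hH⟩ := exists_transpose_mul_self_eq M
  refine ⟨fun i => ∑ j, H i j • b j, ?_⟩
  simp only [h_eq, sum_sq_eq_sum_transpose_mul, hH, AddSubmonoidClass.coe_finsetSum,
    Submodule.coe_smul]

end SumsOfSquares

section Closedness

theorem isProperMap_sum_sq (ι : Type*) [Fintype ι] :
    IsProperMap fun v : ι → ℝ => ∑ i, v i ^ 2 := by
  refine isProperMap_iff_tendsto_cocompact.2 ⟨by fun_prop, .mono_right ?_ atTop_le_cocompact⟩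
  have norm_sq_le (v : ι → ℝ) : ‖v‖ ^ 2 ≤ ∑ i, v i ^ 2 := by
    refine (Real.le_sqrt (norm_nonneg v) (sum_nonneg fun i _ => sq_nonneg (v i))).1 ?_
    exact (pi_norm_le_iff_of_nonneg (Real.sqrt_nonneg _)).2 fun i =>
      Real.abs_le_sqrt (single_le_sum (fun j _ => sq_nonneg (v j)) (mem_univ i))
  exact Filter.tendsto_atTop_mono norm_sq_le
    ((Filter.tendsto_pow_atTop two_ne_zero).comp tendsto_norm_cocompact_atTop)

theorem isClosed_sosCone {X : Type*} (V : Submodule ℝ (X → ℝ)) [FiniteDimensional ℝ V] :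
    IsClosed (sosCone V : Set (X → ℝ)) := by
  let N := Module.finrank ℝ V
  let values : (Fin N → V) →ₗ[ℝ] (X → Fin N → ℝ) :=
    { toFun := fun h x i => (h i : X → ℝ) x
      map_add' := fun _ _ => rfl
      map_smul' := fun _ _ => rfl }
  have values_ker : LinearMap.ker values = ⊥ :=
    LinearMap.ker_eq_bot.2 fun h h' hh => funext fun i => Subtype.ext <| funext fun x =>
      congrFun (congrFun hh x) i
  have values_proper : IsProperMap values :=
    (LinearMap.isClosedEmbedding_of_injective values_ker).isProperMap
  have sumSq_proper : IsProperMap (Pi.map fun (_ : X) (v : Fin N → ℝ) => ∑ i, v i ^ 2) :=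
    .pi_map fun _ => isProperMap_sum_sq (Fin N)
  convert (sumSq_proper.comp values_proper).isClosedMap.isClosed_range using 1
  ext g
  rw [SetLike.mem_coe, mem_sosCone_iff_finrank, Set.mem_range]
  refine exists_congr fun h => eq_comm.trans (Eq.congr_left ?_)
  ext x
  simp [values, N]

theorem exists_isMinOn_sum {ι : Type*} [Fintype ι] {S : Set (ι → ℝ)}
    (hS : IsClosed S) (hne : S.Nonempty) (hnonneg : ∀ l ∈ S, 0 ≤ l) :
    ∃ l ∈ S, IsMinOn (fun l => ∑ i, l i) S l := by
  obtain ⟨l₀, hl₀⟩ := hne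
  refine ContinuousOn.exists_isMinOn' (by fun_prop) hS hl₀ ?_
  rw [Filter.eventually_inf_principal]
  filter_upwards [tendsto_norm_cocompact_atTop.eventually_ge_atTop (∑ i, l₀ i)] with l hl hlS
  have norm_le_sum : ‖l‖ ≤ ∑ i, l i := by
    refine (pi_norm_le_iff_of_nonneg (sum_nonneg fun i _ => hnonneg l hlS i)).2 fun i => ?_
    rw [Real.norm_of_nonneg (hnonneg l hlS i)]
    exact single_le_sum (fun j _ => hnonneg l hlS j) (mem_univ i)
  exact hl.trans norm_le_sum

end Closedness

section ArithmeticGeometric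

/- `SetLike.GradedMonoid` only asks for `1 ∈ V 0` and `V i * V j ⊆ V (i + j)`, so it covers
filtrations such as the one by total degree. -/
variable {A : Type*} [CommRing A] [Algebra ℝ A] {V : ℕ → Submodule ℝ A} [SetLike.GradedMonoid V]

theorem young_mem_sosCone {p q w : A} {a d : ℕ} (hp : p ∈ V 1) (hq : q ∈ V 1) (hw : w ∈ V a)
    (e : ℕ) (hd : a + (e + 1) = d) :
    (w * q ^ (e + 1)) ^ 2 + e • (w * p ^ (e + 1)) ^ 2 - (e + 1) • (w * q * p ^ e) ^ 2 ∈
      sosCone (V d) := by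
  induction e generalizing a w with
  | zero => simp
  | succ e ih =>
    -- The expression for `(w, e + 1)` exceeds that for `(w * q, e)` by `e + 1` times a square.
    have hwq : w * q ∈ V (a + 1) := SetLike.mul_mem_graded hw hq
    have hdiff : w * p ^ e * (p ^ 2 - q ^ 2) ∈ V d := by
      have hwp : w * p ^ e ∈ V (a + e • 1) :=
        SetLike.mul_mem_graded hw (SetLike.pow_mem_graded e hp)
      convert SetLike.mul_mem_graded hwp (Submodule.sub_mem _ (SetLike.pow_mem_graded 2 hp)
        (SetLike.pow_mem_graded 2 hq)) using 2
      simp [← hd, add_assoc]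
    convert add_mem (ih hwq (by omega)) (nsmul_mem (sq_mem_sosCone hdiff) (e + 1)) using 1
    simp only [nsmul_eq_mul]
    push_cast
    ring

theorem sum_sq_pow_card_sub_sq_prod_mem_sosCone {ι : Type*} (s : Finset ι) {p : ι → A} {w : A}
    {a d : ℕ} (hp : ∀ i ∈ s, p i ∈ V 1) (hw : w ∈ V a) (hd : a + #s = d) :
    ∑ i ∈ s, (w * p i ^ #s) ^ 2 - #s • (w * ∏ i ∈ s, p i) ^ 2 ∈ sosCone (V d) := by
  classical
  induction s using Finset.induction_on generalizing a w with
  | empty => simp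
  | insert j s hj ih =>
    rw [card_insert_of_notMem hj] at hd ⊢
    rw [sum_insert hj, prod_insert hj]
    rw [forall_mem_insert] at hp
    rcases s.eq_empty_or_nonempty with rfl | hs
    · simp
    -- Compare `p j` with each `p i` separately, and the `p i` among themselves by induction.
    have rest := ih hp.2 (SetLike.mul_mem_graded hw hp.1) (by omega)
    have pairs := sum_mem fun i hi => young_mem_sosCone (hp.2 i hi) hp.1 hw #s hd
    rw [← (sosCone (V d)).smul_mem_iff (c := (#s : ℝ)) (by simpa using hs.card_pos)]
    convert add_mem pairs (nsmul_mem rest (#s + 1)) using 1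
    simp only [Nat.cast_smul_eq_nsmul, sum_sub_distrib, sum_add_distrib, sum_const, ← smul_sum]
    simp only [nsmul_eq_mul]
    push_cast
    ring

theorem sum_nsmul_pow_sub_sq_prod_pow_mem_sosCone {ι : Type*} [Fintype ι] {p : ι → A}
    (hp : ∀ i, p i ∈ V 1) {β : ι → ℕ} {d : ℕ} (hβ : ∑ i, β i = d) :
    ∑ i, β i • p i ^ (2 * d) - d • (∏ i, p i ^ β i) ^ 2 ∈ sosCone (V d) := by
  have h := sum_sq_pow_card_sub_sq_prod_mem_sosCone (univ.sigma fun i => range (β i))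
    (fun x _ => hp x.1) SetLike.GradedOne.one_mem (zero_add _)
  simpa [hβ, sum_sigma, prod_sigma, ← pow_mul, mul_comm d 2] using h

theorem abs_smul_add_sq_add_two_mul_smul_mul_mem_sosCone {W : Submodule ℝ A} {u v : A} (hu : u ∈ W)
    (hv : v ∈ W) (c : ℝ) : |c| • (u ^ 2 + v ^ 2) + (2 * c) • (u * v) ∈ sosCone W := by
  rcases le_total 0 c with hc | hc
  · convert PointedCone.smul_mem _ hc (sq_mem_sosCone (W.add_mem hu hv)) using 1
    rw [abs_of_nonneg hc]
    simp only [Algebra.smul_def, map_mul, map_ofNat]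
    ring
  · convert PointedCone.smul_mem _ (neg_nonneg.2 hc) (sq_mem_sosCone (W.sub_mem hu hv)) using 1
    rw [abs_of_nonpos hc]
    simp only [Algebra.smul_def, map_mul, map_ofNat, map_neg]
    ring

theorem abs_smul_sum_nsmul_pow_add_smul_prod_pow_mem_sosCone {ι : Type*} [Fintype ι] {p : ι → A}
    (hp : ∀ i, p i ∈ V 1) {α : ι →₀ ℕ} {d : ℕ} (hα : α.degree = 2 * d) (c : ℝ) :
    |c| • ∑ i, α i • p i ^ (2 * d) + (2 * d * c) • ∏ i, p i ^ α i ∈ sosCone (V d) := by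
  obtain ⟨β, hβα, hβ⟩ := α.exists_le_degree_eq d (by omega)
  obtain ⟨γ, rfl⟩ := le_iff_exists_add.1 hβα
  have hγ : γ.degree = d := by rw [map_add] at hα; omega
  rw [Finsupp.degree_eq_sum] at hβ hγ
  have prod_mem {δ : ι → ℕ} (hδ : ∑ i, δ i = d) : ∏ i, p i ^ δ i ∈ V d := by
    simpa [hδ] using SetLike.prod_pow_mem_graded V (fun _ => 1) p δ (F := univ) fun i _ => hp i
  convert add_mem
    (PointedCone.smul_mem _ (abs_nonneg c)
      (add_mem (sum_nsmul_pow_sub_sq_prod_pow_mem_sosCone hp hβ)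
        (sum_nsmul_pow_sub_sq_prod_pow_mem_sosCone hp hγ)))
    (nsmul_mem (abs_smul_add_sq_add_two_mul_smul_mul_mem_sosCone (prod_mem hβ) (prod_mem hγ) c) d)
    using 1
  simp only [Finsupp.add_apply, add_smul, sum_add_distrib, pow_add, prod_mul_distrib]
  simp only [Algebra.smul_def, eq_natCast, map_mul, map_ofNat, map_natCast]
  ring

end ArithmeticGeometric

section Polynomials

instance gradedMonoid_restrictTotalDegree {σ R : Type*} [CommSemiring R] :
    SetLike.GradedMonoid (restrictTotalDegree σ R) where
  one_mem := by simp [mem_restrictTotalDegree]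
  mul_mem i j p q hp hq := by
    rw [mem_restrictTotalDegree] at hp hq ⊢
    exact (totalDegree_mul p q).trans (add_le_add hp hq)

theorem isClosed_setOf_add_mem_sosCone {σ E : Type*} [AddCommGroup E] [Module ℝ E]
    [TopologicalSpace E] [IsTopologicalAddGroup E] [ContinuousSMul ℝ E] [T2Space E]
    [FiniteDimensional ℝ E] (V : Submodule ℝ (MvPolynomial σ ℝ)) [FiniteDimensional ℝ V]
    (f : MvPolynomial σ ℝ) (L : E →ₗ[ℝ] MvPolynomial σ ℝ) :
    IsClosed {x | f + L x ∈ sosCone V} := by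
  let φ : MvPolynomial σ ℝ →ₐ[ℝ] ((σ → ℝ) → ℝ) := AlgHom.pi fun x => aeval x
  have hφ : Function.Injective φ := fun p q hpq => MvPolynomial.funext fun x => congrFun hpq x
  have preimage_eq : {x | f + L x ∈ sosCone V} =
      (fun x => φ f + (φ.toLinearMap ∘ₗ L) x) ⁻¹' sosCone (V.map φ.toLinearMap) := by
    ext x
    simp [← map_mem_sosCone_map_iff hφ]
  rw [preimage_eq]
  exact (isClosed_sosCone _).preimage
    (continuous_const.add (LinearMap.continuous_of_finiteDimensional _))

variable {n : ℕ}

theorem l1Norm_neg (f : MvPolynomial (Fin n) ℝ) : l1Norm (-f) = l1Norm f := by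
  simp [l1Norm]

theorem l1Norm_eq_eval_one {f : MvPolynomial (Fin n) ℝ} (hf : ∀ α, 0 ≤ f.coeff α) :
    l1Norm f = eval 1 f := by
  simp [l1Norm, eval_eq, abs_of_nonneg (hf _)]

theorem isSOS_iff_mem_sosCone {d : ℕ} {g : MvPolynomial (Fin n) ℝ} :
    IsSOS d g ↔ g ∈ sosCone (restrictTotalDegree (Fin n) ℝ d) := by
  simp only [← mem_restrictTotalDegree, IsSOS]
  constructor
  · rintro ⟨k, h, hd, rfl⟩
    exact ⟨k, fun i => ⟨h i, hd i⟩, rfl⟩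
  · rintro ⟨k, h, rfl⟩
    exact ⟨k, fun i => h i, fun i => (h i).2, rfl⟩

theorem IsSOS.totalDegree_le {d : ℕ} {g : MvPolynomial (Fin n) ℝ} (hg : IsSOS d g) :
    g.totalDegree ≤ 2 * d := by
  obtain ⟨k, h, hd, rfl⟩ := hg
  exact totalDegree_finsetSum_le fun i _ =>
    (totalDegree_pow _ _).trans (Nat.mul_le_mul_left 2 (hd i))

/-- The variables `x₁, …, xₙ` preceded by `1`, which plays the role of a homogenising variable
`x₀`. -/
noncomputable def dehomogVar : Fin (n + 1) → MvPolynomial (Fin n) ℝ :=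
  Fin.cons 1 X

theorem dehomogVar_mem (i : Fin (n + 1)) :
    dehomogVar i ∈ restrictTotalDegree (Fin n) ℝ 1 := by
  cases i using Fin.cases <;> simp [dehomogVar, mem_restrictTotalDegree]

theorem prod_dehomogVar_pow (k : ℕ) (α : Fin n →₀ ℕ) :
    ∏ i, dehomogVar i ^ α.cons k i = monomial α 1 := by
  simp [Fin.prod_univ_succ, dehomogVar, monomial_eq, Finsupp.prod_fintype]

/-- The perturbation `l₀ + ∑ᵢ lᵢ xᵢ^{2d}`, as a linear function of its coefficient vector. -/
noncomputable def penalty (d : ℕ) : (Fin (n + 1) → ℝ) →ₗ[ℝ] MvPolynomial (Fin n) ℝ :=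
  Fintype.linearCombination ℝ fun i => dehomogVar i ^ (2 * d)

theorem penalty_apply (d : ℕ) (l : Fin (n + 1) → ℝ) :
    penalty d l = ∑ i, l i • dehomogVar i ^ (2 * d) :=
  Fintype.linearCombination_apply ..

theorem penalty_eq_C_add_sum (d : ℕ) (l : Fin (n + 1) → ℝ) :
    penalty d l = C (l 0) + ∑ i : Fin n, C (l i.succ) * X i ^ (2 * d) := by
  simp [penalty_apply, Fin.sum_univ_succ, dehomogVar, smul_eq_C_mul]

theorem l1Norm_penalty (d : ℕ) {l : Fin (n + 1) → ℝ} (hl : 0 ≤ l) :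
    l1Norm (penalty d l) = ∑ i, l i := by
  have coeff_nonneg (α : Fin n →₀ ℕ) : 0 ≤ (penalty d l).coeff α := by
    rw [penalty_eq_C_add_sum, coeff_add, coeff_C, coeff_sum]
    simp only [X_pow_eq_monomial, coeff_C_mul, coeff_monomial]
    exact add_nonneg (ite_nonneg (hl 0) le_rfl) (sum_nonneg fun i _ =>
      mul_nonneg (hl i.succ) (ite_nonneg zero_le_one le_rfl))
  rw [l1Norm_eq_eval_one coeff_nonneg, penalty_eq_C_add_sum]
  simp [Fin.sum_univ_succ]

/-- The nonnegative coefficient vectors `l` whose perturbation turns `f` into a sum of squares of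
polynomials of degree at most `d`. -/
def sosPenalties (d : ℕ) (f : MvPolynomial (Fin n) ℝ) : Set (Fin (n + 1) → ℝ) :=
  {l | 0 ≤ l ∧ f + penalty d l ∈ sosCone (restrictTotalDegree (Fin n) ℝ d)}

theorem isClosed_sosPenalties (d : ℕ) (f : MvPolynomial (Fin n) ℝ) :
    IsClosed (sosPenalties d f) :=
  isClosed_Ici.inter (isClosed_setOf_add_mem_sosCone _ f (penalty d))

theorem sum_mem_sosPenalties {d : ℕ} {ι : Type*} {s : Finset ι}
    {f : ι → MvPolynomial (Fin n) ℝ} {l : ι → Fin (n + 1) → ℝ}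
    (hl : ∀ i ∈ s, l i ∈ sosPenalties d (f i)) :
    ∑ i ∈ s, l i ∈ sosPenalties d (∑ i ∈ s, f i) := by
  refine ⟨sum_nonneg fun i hi => (hl i hi).1, ?_⟩
  rw [map_sum, ← sum_add_distrib]
  exact sum_mem fun i hi => (hl i hi).2

theorem exists_mem_sosPenalties_monomial {d : ℕ} {α : Fin n →₀ ℕ} (hα : α.degree ≤ 2 * d)
    (c : ℝ) : ∃ l ∈ sosPenalties d (monomial α c), ∑ i, l i = |c| := by
  rcases eq_or_ne d 0 with rfl | hd
  · refine ⟨Pi.single 0 |c|, ⟨by simp, ?_⟩, by simp⟩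
    have hsq := (sosCone _).smul_mem (show 0 ≤ c + |c| by linarith [neg_abs_le c])
      (sq_mem_sosCone (SetLike.GradedOne.one_mem (A := restrictTotalDegree (Fin n) ℝ)))
    obtain rfl : α = 0 := (Finsupp.degree_eq_zero_iff α).1 (by simpa using hα)
    simpa [penalty_apply, Pi.single_apply, smul_eq_C_mul, ← C_mul_monomial] using hsq
  · let α' := α.cons (2 * d - α.degree)
    have hα' : α'.degree = 2 * d := by
      have := α.degree_eq_sum
      simp only [α', Finsupp.degree_eq_sum, Fin.sum_univ_succ, Finsupp.cons_zero,
        Finsupp.cons_succ]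
      omega
    have hd' : (2 * d : ℝ) ≠ 0 := by positivity
    refine ⟨fun i => |c| * α' i / (2 * d), ⟨fun i => by positivity, ?_⟩, ?_⟩
    · convert (sosCone _).smul_mem (show 0 ≤ (2 * d : ℝ)⁻¹ by positivity)
        (abs_smul_sum_nsmul_pow_add_smul_prod_pow_mem_sosCone dehomogVar_mem hα' c) using 1
      rw [prod_dehomogVar_pow, penalty_apply, smul_add, smul_smul, smul_smul,
        inv_mul_cancel_left₀ hd', smul_monomial, smul_eq_mul, mul_one, add_comm, smul_sum]
      congr! 2 with i
      rw [← Nat.cast_smul_eq_nsmul ℝ, smul_smul]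
      congr 1
      ring
    · rw [← sum_div, ← mul_sum, ← Nat.cast_sum, ← Finsupp.degree_eq_sum, hα']
      push_cast
      field_simp

theorem exists_mem_sosPenalties_sum_eq_l1Norm {d : ℕ} {h : MvPolynomial (Fin n) ℝ}
    (hh : h.totalDegree ≤ 2 * d) : ∃ l ∈ sosPenalties d h, ∑ i, l i = l1Norm h := by
  choose! l hl hsum using fun α (hα : α ∈ h.support) =>
    exists_mem_sosPenalties_monomial ((le_totalDegree hα).trans hh) (h.coeff α)
  refine ⟨∑ α ∈ h.support, l α, ?_, ?_⟩
  · simpa only [support_sum_monomial_coeff] using sum_mem_sosPenalties hl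
  · simp only [Finset.sum_apply]
    rw [sum_comm]
    exact sum_congr rfl hsum

theorem IsSOS.exists_mem_sosPenalties {d : ℕ} {f g : MvPolynomial (Fin n) ℝ} (hg : IsSOS d g)
    (hf : f.totalDegree ≤ 2 * d) : ∃ l ∈ sosPenalties d f, ∑ i, l i = l1Norm (f - g) := by
  obtain ⟨l, ⟨hl, hsos⟩, hsum⟩ := exists_mem_sosPenalties_sum_eq_l1Norm
    ((totalDegree_sub f g).trans (max_le hf hg.totalDegree_le))
  refine ⟨l, ⟨hl, ?_⟩, hsum⟩
  simpa [add_right_comm] using add_mem hsos (isSOS_iff_mem_sosCone.1 hg)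

end Polynomials

/-- Best ℓ₁-approximation of `f` by a sum of squares of degree at most `2d`:
there is a nonnegative vector `l ∈ ℝ₊^{n+1}` such that
`g = f + l₀ + ∑ᵢ lᵢ xᵢ^{2d}` is a sum of squares of polynomials of degree at most `d`,
`‖f - g‖₁ = ∑ᵢ lᵢ`, and this value equals `ρ_d(f)`. -/
theorem best_l1_approx_by_sos {n d : ℕ} (f : MvPolynomial (Fin n) ℝ)
    (hf : f.totalDegree ≤ 2 * d) :
    ∃ l : Fin (n + 1) → ℝ, (∀ i, 0 ≤ l i) ∧
      IsSOS d (f + C (l 0) + ∑ i : Fin n, C (l i.succ) * X i ^ (2 * d)) ∧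
      l1Norm (f - (f + C (l 0) + ∑ i : Fin n, C (l i.succ) * X i ^ (2 * d))) = ∑ i, l i ∧
      ∑ i, l i = rho d f := by
  have hne : (sosPenalties d f).Nonempty :=
    let ⟨l, hl, _⟩ := (isSOS_iff_mem_sosCone.2 (zero_mem _)).exists_mem_sosPenalties hf
    ⟨l, hl⟩
  obtain ⟨l, ⟨hl, hsos⟩, hmin⟩ :=
    exists_isMinOn_sum (isClosed_sosPenalties d f) hne fun l hl => hl.1
  have hnorm : l1Norm (f - (f + penalty d l)) = ∑ i, l i := by
    rw [sub_add_cancel_left, l1Norm_neg, l1Norm_penalty d hl]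
  have hleast : IsLeast {r | ∃ g, IsSOS d g ∧ r = l1Norm (f - g)} (∑ i, l i) := by
    refine ⟨⟨_, isSOS_iff_mem_sosCone.2 hsos, hnorm.symm⟩, ?_⟩
    rintro _ ⟨g, hg, rfl⟩
    obtain ⟨l', hl', hsum⟩ := hg.exists_mem_sosPenalties hf
    exact hsum ▸ hmin hl'
  simp only [add_assoc, ← penalty_eq_C_add_sum]
  exact ⟨l, hl, isSOS_iff_mem_sosCone.2 hsos, hnorm, hleast.csInf_eq.symm⟩
end

section
/- Let L be a linear functional on the space of real polynomials in n variables of degree at most 2d such that L(g²) ≥ 0 for every polynomial g of degree at most d. Then for every multi-index α ∈ ℕⁿ with |α| ≤ 2d, |L(x^α)| ≤ max( L(1), max_{1≤i≤n} L(xᵢ^{2d}) ). -/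
/-!
Applying `L` to `(x ^ β ± x ^ γ) ^ 2` gives `2 |L (x ^ (β + γ))| ≤ L (x ^ (2β)) + L (x ^ (2γ))`.
Hence `β ↦ L (x ^ (2β))` is midpoint convex on the lattice points of the simplex `|β| ≤ d`. On a
segment in the direction `eᵢ - eⱼ` it is at most the larger of its values at the two ends, where a
coordinate vanishes; repeating this, and then moving along an axis, bounds it by its values at the
vertices `0` and `d eᵢ`, which are `L 1` and `L (xᵢ ^ (2d))`. A general `α` is a sum `β + γ` with
`|β|, |γ| ≤ d`, so the same inequality bounds its moment.
-/

open MvPolynomial Finset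

/-- Discrete midpoint convexity of `f` on `s`, with `a + b = 2 • c` encoding that `c` is the
midpoint of `a` and `b`; the even moments `β ↦ L (x ^ (2β))` of a functional that is nonnegative on
squares have this property. -/
def IsMidpointConvexOn {M G : Type*} [AddMonoid M] [AddMonoid G] [LE G] (s : Set M) (f : M → G) :
    Prop :=
  ∀ ⦃a b c⦄, a ∈ s → b ∈ s → c ∈ s → a + b = 2 • c → 2 • f c ≤ f a + f b

namespace IsMidpointConvexOn

section Restriction

variable {M N G : Type*} [AddMonoid M] [AddMonoid N] [AddMonoid G] [LE G] {s t : Set M}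
  {f : M → G}

theorem mono (hf : IsMidpointConvexOn t f) (hst : s ⊆ t) : IsMidpointConvexOn s f :=
  fun _ _ _ ha hb hc ↦ hf (hst ha) (hst hb) (hst hc)

theorem comp {φ : N → M} {u : Set N} (hf : IsMidpointConvexOn s f) (hφs : Set.MapsTo φ u s)
    (hφ : ∀ a ∈ u, ∀ b ∈ u, ∀ c ∈ u, a + b = 2 • c → φ a + φ b = 2 • φ c) :
    IsMidpointConvexOn u (f ∘ φ) :=
  fun _ _ _ ha hb hc h ↦ hf (hφs ha) (hφs hb) (hφs hc) (hφ _ ha _ hb _ hc h)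

end Restriction

variable {σ G : Type*} [AddCommGroup G] [LinearOrder G] [IsOrderedAddMonoid G]

theorem apply_le_max_endpoints {f : ℕ → G} {n k : ℕ} (hf : IsMidpointConvexOn (Set.Iic n) f)
    (hk : k ≤ n) : f k ≤ max (f 0) (f n) := by
  induction n generalizing k with
  | zero => simp [Nat.le_zero.mp hk]
  | succ n ih =>
    rcases hk.eq_or_lt with rfl | hk
    · exact le_max_right _ _
    replace ih {j : ℕ} (hj : j ≤ n) : f j ≤ max (f 0) (f n) :=
      ih (hf.mono <| Set.Iic_subset_Iic.mpr n.le_succ) hj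
    suffices f n ≤ max (f 0) (f (n + 1)) from
      (ih (Nat.lt_succ_iff.mp hk)).trans (max_le (le_max_left _ _) this)
    cases n with
    | zero => exact le_max_left _ _
    | succ m =>
      have hmid : 2 • f (m + 1) ≤ f m + f (m + 2) :=
        hf (Nat.le_add_right m 2) (by simp) (by simp) (by simp only [smul_eq_mul]; ring)
      have hm : f m ≤ max (f 0) (f (m + 1)) := ih m.le_succ
      by_contra! hlt
      obtain ⟨h_left, h_right⟩ := max_lt_iff.mp hlt
      have hle : f m ≤ f (m + 1) := hm.trans (max_le h_left.le le_rfl)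
      exact (hmid.trans_lt (add_lt_add_of_le_of_lt hle h_right)).ne (two_nsmul _)

variable {d : ℕ} {y : (σ →₀ ℕ) → G}

theorem apply_single_le (hy : IsMidpointConvexOn {β | β.degree ≤ d} y) (i : σ) {k : ℕ}
    (hk : k ≤ d) : y (.single i k) ≤ max (y 0) (y (.single i d)) := by
  have hline : IsMidpointConvexOn (Set.Iic d) (y ∘ Finsupp.single i) :=
    hy.comp (fun k hk ↦ by simpa using hk) fun a _ b _ c _ h ↦ by
      rw [← Finsupp.single_add, h, Finsupp.smul_single]
  simpa using hline.apply_le_max_endpoints hk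

theorem apply_add_single_add_single_le (hy : IsMidpointConvexOn {β | β.degree ≤ d} y)
    (β : σ →₀ ℕ) (i j : σ) {a b : ℕ} (h : β.degree + a + b ≤ d) :
    y (β + .single i a + .single j b) ≤
      max (y (β + .single j (a + b))) (y (β + .single i (a + b))) := by
  let φ (k : ℕ) : σ →₀ ℕ := β + .single i k + .single j (a + b - k)
  have hline : IsMidpointConvexOn (Set.Iic (a + b)) (y ∘ φ) := by
    refine hy.comp (fun k hk ↦ ?_) fun k hk l hl m hm hklm ↦ ?_
    · simp only [Set.mem_Iic] at hk
      simp only [φ, Set.mem_ofPred_eq, map_add, Finsupp.degree_single]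
      omega
    · simp only [Set.mem_Iic, smul_eq_mul] at hk hl hm hklm
      have hcompl : a + b - k + (a + b - l) = 2 * (a + b - m) := by omega
      calc φ k + φ l
          = 2 • β + .single i (k + l) + .single j (a + b - k + (a + b - l)) := by
            simp only [φ, Finsupp.single_add, two_nsmul]; abel
        _ = 2 • φ m := by
            simp only [φ, hklm, hcompl, smul_add, Finsupp.smul_single, smul_eq_mul]
  simpa [φ] using hline.apply_le_max_endpoints (Nat.le_add_right a b)

-- The spare summand `c eᵢ` absorbs each coordinate removed from `β` in the induction.
theorem apply_add_single_le (hy : IsMidpointConvexOn {β | β.degree ≤ d} y) {B : G}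
    (h0 : y 0 ≤ B) (hvertex : ∀ i, y (.single i d) ≤ B) {β : σ →₀ ℕ} (i : σ) {c : ℕ}
    (h : β.degree + c ≤ d) : y (β + .single i c) ≤ B := by
  induction β using Finsupp.induction generalizing i c with
  | zero =>
    rw [zero_add]
    exact (hy.apply_single_le i (by simpa using h)).trans (max_le h0 (hvertex i))
  | single_add j b β _ _ ih =>
    simp only [map_add, Finsupp.degree_single] at h
    rw [add_comm (Finsupp.single j b)]
    exact (hy.apply_add_single_add_single_le β j i (by omega)).trans
      (max_le (ih i (by omega)) (ih j (by omega)))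

theorem apply_le_of_apply_vertex_le (hy : IsMidpointConvexOn {β | β.degree ≤ d} y) {B : G}
    (h0 : y 0 ≤ B) (hvertex : ∀ i, y (.single i d) ≤ B) {β : σ →₀ ℕ} (hβ : β.degree ≤ d) :
    y β ≤ B := by
  rcases isEmpty_or_nonempty σ with _ | ⟨⟨i⟩⟩
  · rwa [Subsingleton.elim β 0]
  · simpa using hy.apply_add_single_le h0 hvertex i (c := 0) hβ

end IsMidpointConvexOn

theorem exists_add_eq_of_degree_le_add {σ : Type*} {a b : ℕ} {α : σ →₀ ℕ} (hα : α.degree ≤ a + b) :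
    ∃ β γ : σ →₀ ℕ, β + γ = α ∧ β.degree ≤ a ∧ γ.degree ≤ b := by
  obtain ⟨β, hβα, hβ⟩ := α.exists_le_degree_eq (min a α.degree) (min_le_right _ _)
  obtain ⟨γ, rfl⟩ := exists_add_of_le hβα
  rw [map_add] at hα hβ
  exact ⟨β, γ, rfl, by omega, by omega⟩

section SquareNonneg

variable {G : Type*} [AddCommGroup G] [LinearOrder G] [IsOrderedAddMonoid G]

theorem two_nsmul_abs_map_mul_le {A : Type*} [CommRing A] (L : A →+ G) {p q : A}
    (hadd : 0 ≤ L ((p + q) ^ 2)) (hsub : 0 ≤ L ((p - q) ^ 2)) :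
    2 • |L (p * q)| ≤ L (p ^ 2) + L (q ^ 2) := by
  have hadd_expand : (p + q) ^ 2 = p ^ 2 + q ^ 2 + 2 • (p * q) := by ring
  have hsub_expand : (p - q) ^ 2 = p ^ 2 + q ^ 2 - 2 • (p * q) := by ring
  rw [hadd_expand, map_add, map_add, map_nsmul] at hadd
  rw [hsub_expand, map_sub, map_add, map_nsmul] at hsub
  rw [← abs_nsmul, abs_le']
  exact ⟨sub_nonneg.mp hsub, neg_le_iff_add_nonneg.mpr hadd⟩

variable {σ R : Type*} [CommRing R] {L : MvPolynomial σ R →+ G} {d : ℕ}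

theorem two_nsmul_abs_map_monomial_add_le
    (hL : ∀ g : MvPolynomial σ R, g.totalDegree ≤ d → 0 ≤ L (g ^ 2))
    {β γ : σ →₀ ℕ} (hβ : β.degree ≤ d) (hγ : γ.degree ≤ d) :
    2 • |L (monomial (β + γ) 1)| ≤ L (monomial (2 • β) 1) + L (monomial (2 • γ) 1) := by
  have hβ' : (monomial β (1 : R)).totalDegree ≤ d := (totalDegree_monomial_le _ _).trans hβ
  have hγ' : (monomial γ (1 : R)).totalDegree ≤ d := (totalDegree_monomial_le _ _).trans hγ
  simpa [monomial_mul, monomial_pow] using two_nsmul_abs_map_mul_le L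
    (hL _ <| (totalDegree_add _ _).trans (max_le hβ' hγ'))
    (hL _ <| (totalDegree_sub _ _).trans (max_le hβ' hγ'))

theorem isMidpointConvexOn_map_monomial_two_nsmul
    (hL : ∀ g : MvPolynomial σ R, g.totalDegree ≤ d → 0 ≤ L (g ^ 2)) :
    IsMidpointConvexOn {β : σ →₀ ℕ | β.degree ≤ d} fun β ↦ L (monomial (2 • β) 1) := by
  intro β γ δ hβ hγ _ h
  calc 2 • L (monomial (2 • δ) 1)
      ≤ 2 • |L (monomial (β + γ) 1)| := by rw [h]; exact nsmul_le_nsmul_right (le_abs_self _) 2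
    _ ≤ L (monomial (2 • β) 1) + L (monomial (2 • γ) 1) :=
      two_nsmul_abs_map_monomial_add_le hL hβ hγ

theorem moment_bound_general (hL : ∀ g : MvPolynomial σ R, g.totalDegree ≤ d → 0 ≤ L (g ^ 2))
    {B : G} (hone : L 1 ≤ B) (hX : ∀ i, L (X i ^ (2 * d)) ≤ B)
    {α : σ →₀ ℕ} (hα : α.degree ≤ 2 * d) : |L (monomial α 1)| ≤ B := by
  have heven {β : σ →₀ ℕ} (hβ : β.degree ≤ d) : L (monomial (2 • β) 1) ≤ B :=
    (isMidpointConvexOn_map_monomial_two_nsmul hL).apply_le_of_apply_vertex_le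
      (by simpa using hone) (fun i ↦ by simpa [X_pow_eq_monomial] using hX i) hβ
  obtain ⟨β, γ, rfl, hβ, hγ⟩ := exists_add_eq_of_degree_le_add (hα.trans_eq (two_mul d))
  refine le_of_nsmul_le_nsmul_right two_ne_zero ?_
  calc 2 • |L (monomial (β + γ) 1)|
      ≤ L (monomial (2 • β) 1) + L (monomial (2 • γ) 1) :=
        two_nsmul_abs_map_monomial_add_le hL hβ hγ
    _ ≤ B + B := add_le_add (heven hβ) (heven hγ)
    _ = 2 • B := (two_nsmul B).symm

end SquareNonneg

/-- Lemma 1 of [arch]: if `L(g²) ≥ 0` for every polynomial `g` of degree at most `d`,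
then for every multi-index `α` with `|α| ≤ 2d`,
`|L(x^α)| ≤ max (L(1)) (maxᵢ L(xᵢ^{2d}))`. -/
theorem moment_bound {n d : ℕ} (hn : 0 < n) (L : MvPolynomial (Fin n) ℝ →ₗ[ℝ] ℝ)
    (hpsd : ∀ g : MvPolynomial (Fin n) ℝ, g.totalDegree ≤ d → 0 ≤ L (g ^ 2))
    (α : Fin n →₀ ℕ) (hα : α.degree ≤ 2 * d) :
    |L (monomial α 1)| ≤
      max (L 1)
        (Finset.univ.sup' (Finset.univ_nonempty_iff.mpr ⟨⟨0, hn⟩⟩)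
          fun i : Fin n => L (X i ^ (2 * d))) := by
  refine moment_bound_general (L := L.toAddMonoidHom) hpsd (le_max_left _ _) (fun i ↦ ?_) hα
  exact le_max_of_le_right (le_sup' (fun i ↦ L (X i ^ (2 * d))) (mem_univ i))
end

section
/- Let f ∈ ℝ[x₁,…,xₙ] with deg f ≤ 2d. Then the two optimization problems sup{ −L(f) : L linear on polynomials of degree ≤ 2d, L(g²) ≥ 0 for all g of degree ≤ d, |L(x^α)| ≤ 1 for all |α| ≤ 2d } and sup{ −L(f) : L linear on polynomials of degree ≤ 2d, L(g²) ≥ 0 for all g of degree ≤ d, L(1) ≤ 1, L(xᵢ^{2d}) ≤ 1 for i = 1,…,n } have the same optimal value. -/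
open MvPolynomial Finset

/-!
A functional `L` that is nonnegative on squares satisfies the Cauchy–Schwarz inequality
`L(pq)² ≤ L(p²) L(q²)`. Hence the even moments `φ(a) = L(x^{2a})`, `|a| ≤ d`, are nonnegative and
log-convex at midpoints. Every lattice point of the simplex `|a| ≤ d` other than the vertices `0`
and `d eᵢ` is the midpoint of two distinct lattice points of the simplex; if it maximizes `φ` with a
positive value, then so do these two. This is impossible for the maximizer that is largest in an
additive linear order, so that one is a vertex, and `φ` is bounded by `L(1)` and the `L(xᵢ^{2d})`.
Cauchy–Schwarz for a splitting `α = b + c` with `|b|, |c| ≤ d` then bounds `|L(x^α)|`.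
-/

section MaximumPrinciple

variable {K M : Type*} [CommSemiring K] [LinearOrder K] [IsStrictOrderedRing K]
  [AddCommMonoid M] [LinearOrder M] [IsOrderedCancelAddMonoid M]

theorem le_of_forall_exists_midpoint_sq_le_mul {s : Set M} (hs : s.Finite) {φ : M → K} {C : K}
    (hC : 0 ≤ C) (hφ : ∀ a ∈ s, 0 ≤ φ a)
    (hmid : ∀ a ∈ s, C < φ a →
      ∃ b ∈ s, ∃ c ∈ s, b ≠ c ∧ b + c = a + a ∧ φ a ^ 2 ≤ φ b * φ c) :
    ∀ a ∈ s, φ a ≤ C := by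
  intro a₀ ha₀
  by_contra! hlt
  obtain ⟨a, ha, hmax⟩ := Set.exists_max_image s (fun x ↦ toLex (φ x, x)) hs ⟨a₀, ha₀⟩
  have φ_le (x : M) (hx : x ∈ s) : φ x ≤ φ a := Prod.Lex.monotone_fst _ _ (hmax x hx)
  have φ_lt (x : M) (hx : x ∈ s) (hax : a < x) : φ x < φ a := by
    rcases Prod.Lex.toLex_le_toLex.mp (hmax x hx) with h | ⟨-, h⟩
    · exact h
    · exact absurd h hax.not_ge
  have hCa : C < φ a := hlt.trans_le (φ_le a₀ ha₀)
  obtain ⟨b, hb, c, hc, hne, hsum, hsq⟩ := hmid a ha hCa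
  wlog hbc : c < b generalizing b c
  · exact this c hc b hb hne.symm (add_comm b c ▸ hsum) (mul_comm (φ b) (φ c) ▸ hsq)
      (hne.lt_of_le (not_lt.mp hbc))
  have hab : a < b := by
    by_contra! hba
    exact (add_lt_add_of_le_of_lt hba (hbc.trans_le hba)).ne hsum
  have hprod : φ b * φ c < φ a ^ 2 := calc
    φ b * φ c ≤ φ b * φ a := mul_le_mul_of_nonneg_left (φ_le c hc) (hφ b hb)
    _ < φ a * φ a := mul_lt_mul_of_pos_right (φ_lt b hb hab) (hC.trans_lt hCa)
    _ = φ a ^ 2 := (sq _).symm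
  exact hprod.not_ge hsq

end MaximumPrinciple

section Exponents

variable {σ : Type*}

theorem finite_setOf_degree_le_and_support_subset (d : ℕ) (t : Finset σ) :
    {a : σ →₀ ℕ | a.degree ≤ d ∧ a.support ⊆ t}.Finite := by
  refine (t.finsupp fun _ ↦ range (d + 1)).finite_toSet.subset fun a ⟨hdeg, ht⟩ ↦ ?_
  exact mem_finsupp_iff.mpr
    ⟨ht, fun i _ ↦ mem_range_succ_iff.mpr ((Finsupp.le_degree i a).trans hdeg)⟩

theorem exists_add_eq_of_degree_le_add_s8 {a : σ →₀ ℕ} {m n : ℕ} (ha : a.degree ≤ m + n) :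
    ∃ b c : σ →₀ ℕ, b + c = a ∧ b.degree ≤ m ∧ c.degree ≤ n := by
  obtain ⟨b, hba, hb⟩ := Finsupp.exists_le_degree_eq a (min m a.degree) (min_le_right _ _)
  obtain ⟨c, rfl⟩ := exists_add_of_le hba
  rw [map_add] at ha hb
  exact ⟨b, c, rfl, by lia, by lia⟩

theorem eq_zero_or_eq_single_or_exists_midpoint {d : ℕ} {a : σ →₀ ℕ} (ha : a.degree ≤ d) :
    a = 0 ∨ (∃ i, a = Finsupp.single i d) ∨
      ∃ b c : σ →₀ ℕ, b ≠ c ∧ b + c = a + a ∧ b.degree ≤ d ∧ c.degree ≤ d := by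
  rcases eq_or_ne a 0 with ha0 | ha0
  · exact .inl ha0
  right
  obtain ⟨i, hi⟩ := Finsupp.ne_iff.mp ha0
  obtain ⟨x, rfl⟩ := exists_add_of_le
    (Finsupp.single_le_iff.mpr (Nat.one_le_iff_ne_zero.mpr hi))
  have hdeg : (Finsupp.single i 1 + x).degree = 1 + x.degree := by simp
  rcases ha.lt_or_eq with hlt | heq
  · refine .inr ⟨x, Finsupp.single i 2 + x, ?_, ?_, by lia, ?_⟩
    · simp
    · rw [← one_add_one_eq_two, Finsupp.single_add]; abel
    · rw [map_add, Finsupp.degree_single]; lia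
  by_cases hj : ∃ j, j ≠ i ∧ x j ≠ 0
  · obtain ⟨j, hji, hj⟩ := hj
    obtain ⟨y, rfl⟩ := exists_add_of_le
      (Finsupp.single_le_iff.mpr (Nat.one_le_iff_ne_zero.mpr hj))
    simp only [map_add, Finsupp.degree_single] at heq
    refine .inr ⟨Finsupp.single i 2 + y, Finsupp.single j 2 + y, ?_, ?_, ?_, ?_⟩
    · simp [Finsupp.single_left_inj, hji.symm]
    · simp only [← one_add_one_eq_two, Finsupp.single_add]; abel
    all_goals rw [map_add, Finsupp.degree_single]; lia
  · push Not at hj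
    have hx : x = Finsupp.single i (x i) := by
      ext k
      rcases eq_or_ne k i with rfl | hk
      · simp
      · simp [hj k hk, hk]
    refine .inl ⟨i, ?_⟩
    rw [hx, ← Finsupp.single_add, Finsupp.degree_single] at heq
    rw [hx, ← Finsupp.single_add, heq]

variable {K : Type*} [CommSemiring K] [LinearOrder K] [IsStrictOrderedRing K]

theorem le_of_vertices_le_of_sq_le_mul {d : ℕ} {φ : (σ →₀ ℕ) → K} {C : K}
    (hφ : ∀ a, a.degree ≤ d → 0 ≤ φ a)
    (hmid : ∀ a b c, b.degree ≤ d → c.degree ≤ d → b + c = a + a → φ a ^ 2 ≤ φ b * φ c)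
    (hzero : φ 0 ≤ C) (hsingle : ∀ i, φ (Finsupp.single i d) ≤ C)
    {a : σ →₀ ℕ} (ha : a.degree ≤ d) : φ a ≤ C := by
  obtain ⟨_, _⟩ := exists_wellFoundedLT σ
  have hC : 0 ≤ C := (hφ 0 (by simp)).trans hzero
  refine le_of_forall_exists_midpoint_sq_le_mul (M := Lex (σ →₀ ℕ))
    (finite_setOf_degree_le_and_support_subset d a.support) hC (fun x hx ↦ hφ x hx.1) ?_
    a ⟨ha, subset_rfl⟩
  rintro x ⟨hxd, hxs⟩ hx
  rcases eq_zero_or_eq_single_or_exists_midpoint hxd with rfl | ⟨i, rfl⟩ | ⟨b, c, hne, hsum, hb, hc⟩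
  · exact absurd hzero hx.not_ge
  · exact absurd (hsingle i) hx.not_ge
  · have support_subset {y : σ →₀ ℕ} (hy : y ≤ x + x) : y.support ⊆ a.support :=
      (Finsupp.support_mono hy).trans
        (Finsupp.support_add.trans (union_subset hxs hxs))
    exact ⟨b, ⟨hb, support_subset (hsum ▸ le_self_add)⟩,
      c, ⟨hc, support_subset (hsum ▸ le_add_self)⟩, hne, hsum, hmid x b c hb hc hsum⟩

end Exponents

section Moments

theorem apply_monomial_add_self_nonneg {K σ : Type*} [CommSemiring K] [LE K] {d : ℕ}
    {L : MvPolynomial σ K →ₗ[K] K}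
    (hL : ∀ g : MvPolynomial σ K, g.totalDegree ≤ d → 0 ≤ L (g ^ 2))
    {a : σ →₀ ℕ} (ha : a.degree ≤ d) : 0 ≤ L (monomial (a + a) 1) := by
  simpa only [sq, monomial_mul, one_mul] using
    hL (monomial a 1) ((totalDegree_monomial_le a 1).trans ha)

variable {K : Type*} [CommRing K] [LinearOrder K] [IsStrictOrderedRing K]

theorem sq_apply_mul_le_of_sq_nonneg {A : Type*} [CommRing A] [Algebra K A] {V : Submodule K A}
    {L : A →ₗ[K] K} (hL : ∀ g ∈ V, 0 ≤ L (g ^ 2)) {p q : A} (hp : p ∈ V) (hq : q ∈ V) :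
    L (p * q) ^ 2 ≤ L (p ^ 2) * L (q ^ 2) := by
  let B : LinearMap.BilinForm K V := ((LinearMap.mul K A).compr₂ L).domRestrict₁₂ V V
  have hB : LinearMap.IsSymm B := ⟨fun x y ↦ congrArg L (mul_comm (x : A) y)⟩
  have hpos (x : V) : 0 ≤ B x x := (hL x x.2).trans_eq (congrArg L (sq (x : A)))
  rw [sq p, sq q]
  exact B.apply_sq_le_of_symm hpos hB ⟨p, hp⟩ ⟨q, hq⟩

variable {σ : Type*} {d : ℕ} {L : MvPolynomial σ K →ₗ[K] K}

theorem sq_apply_monomial_add_le (hL : ∀ g : MvPolynomial σ K, g.totalDegree ≤ d → 0 ≤ L (g ^ 2))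
    {b c : σ →₀ ℕ} (hb : b.degree ≤ d) (hc : c.degree ≤ d) :
    L (monomial (b + c) 1) ^ 2 ≤ L (monomial (b + b) 1) * L (monomial (c + c) 1) := by
  have mem {a : σ →₀ ℕ} (ha : a.degree ≤ d) : monomial a (1 : K) ∈ restrictTotalDegree σ K d :=
    (mem_restrictTotalDegree σ d _).mpr ((totalDegree_monomial_le a 1).trans ha)
  simpa only [sq (monomial _ _), monomial_mul, one_mul] using
    sq_apply_mul_le_of_sq_nonneg (fun g hg ↦ hL g ((mem_restrictTotalDegree σ d g).mp hg))
      (mem hb) (mem hc)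

theorem apply_monomial_add_self_le {C : K}
    (hL : ∀ g : MvPolynomial σ K, g.totalDegree ≤ d → 0 ≤ L (g ^ 2))
    (hone : L 1 ≤ C) (hX : ∀ i, L (X i ^ (2 * d)) ≤ C)
    {a : σ →₀ ℕ} (ha : a.degree ≤ d) : L (monomial (a + a) 1) ≤ C := by
  refine le_of_vertices_le_of_sq_le_mul (φ := fun a ↦ L (monomial (a + a) 1))
    (fun _ ↦ apply_monomial_add_self_nonneg hL) (fun a b c hb hc hsum ↦ ?_) ?_ (fun i ↦ ?_) ha
  · simpa only [hsum] using sq_apply_monomial_add_le hL hb hc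
  · simpa only [add_zero, monomial_zero', C_1] using hone
  · simpa only [X_pow_eq_monomial, two_mul, Finsupp.single_add] using hX i

theorem forall_abs_apply_monomial_le_iff (C : K)
    (hL : ∀ g : MvPolynomial σ K, g.totalDegree ≤ d → 0 ≤ L (g ^ 2)) :
    (∀ α : σ →₀ ℕ, α.degree ≤ 2 * d → |L (monomial α 1)| ≤ C) ↔
      L 1 ≤ C ∧ ∀ i, L (X i ^ (2 * d)) ≤ C := by
  refine ⟨fun h ↦ ⟨le_of_abs_le (h 0 (by simp)), fun i ↦ ?_⟩, fun ⟨hone, hX⟩ α hα ↦ ?_⟩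
  · rw [X_pow_eq_monomial]
    exact le_of_abs_le (h _ (Finsupp.degree_single i _).le)
  · obtain ⟨b, c, rfl, hb, hc⟩ := exists_add_eq_of_degree_le_add_s8 (hα.trans_eq (two_mul d))
    have hC : 0 ≤ C :=
      (apply_monomial_add_self_nonneg hL hb).trans (apply_monomial_add_self_le hL hone hX hb)
    refine abs_le_of_sq_le_sq ?_ hC
    calc L (monomial (b + c) 1) ^ 2
        ≤ L (monomial (b + b) 1) * L (monomial (c + c) 1) := sq_apply_monomial_add_le hL hb hc
      _ ≤ C * C := mul_le_mul (apply_monomial_add_self_le hL hone hX hb)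
          (apply_monomial_add_self_le hL hone hX hc) (apply_monomial_add_self_nonneg hL hc) hC
      _ = C ^ 2 := (sq C).symm

theorem dual_reduced_same_value_general (C : K) (f : MvPolynomial σ K) :
    {r : K | ∃ L : MvPolynomial σ K →ₗ[K] K,
        (∀ g : MvPolynomial σ K, g.totalDegree ≤ d → 0 ≤ L (g ^ 2)) ∧
        (∀ α : σ →₀ ℕ, α.degree ≤ 2 * d → |L (monomial α 1)| ≤ C) ∧
        r = -L f} =
    {r : K | ∃ L : MvPolynomial σ K →ₗ[K] K,
        (∀ g : MvPolynomial σ K, g.totalDegree ≤ d → 0 ≤ L (g ^ 2)) ∧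
        L 1 ≤ C ∧ (∀ i, L (X i ^ (2 * d)) ≤ C) ∧
        r = -L f} := by
  ext r
  refine exists_congr fun L ↦ and_congr_right fun hL ↦ ?_
  rw [forall_abs_apply_monomial_le_iff C hL, and_assoc]

end Moments

/-- The dual semidefinite program with the bounds `|L(x^α)| ≤ 1` for all `|α| ≤ 2d`
and its reduced form with only the bounds `L(1) ≤ 1`, `L(xᵢ^{2d}) ≤ 1`, `i = 1,…,n`,
have the same optimal value. -/
theorem dual_reduced_same_value {n d : ℕ} (f : MvPolynomial (Fin n) ℝ)
    (hf : f.totalDegree ≤ 2 * d) :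
    sSup {r : ℝ | ∃ L : MvPolynomial (Fin n) ℝ →ₗ[ℝ] ℝ,
        (∀ g : MvPolynomial (Fin n) ℝ, g.totalDegree ≤ d → 0 ≤ L (g ^ 2)) ∧
        (∀ α : Fin n →₀ ℕ, α.degree ≤ 2 * d → |L (monomial α 1)| ≤ 1) ∧
        r = -L f} =
    sSup {r : ℝ | ∃ L : MvPolynomial (Fin n) ℝ →ₗ[ℝ] ℝ,
        (∀ g : MvPolynomial (Fin n) ℝ, g.totalDegree ≤ d → 0 ≤ L (g ^ 2)) ∧
        L 1 ≤ 1 ∧ (∀ i : Fin n, L (X i ^ (2 * d)) ≤ 1) ∧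
        r = -L f} :=
  congrArg sSup (dual_reduced_same_value_general 1 f)
end

section
/- For every n, d ≥ 1 and every f ∈ ℝ[x₁,…,xₙ] with deg f ≤ 2d, there exists N ≥ 0 such that f + N·(1 + Σ_{i=1}^n xᵢ^{2d}) is a sum of squares of polynomials of degree at most d. In particular, the feasible set {λ ∈ ℝ₊^{n+1} : f + λ₀ + Σ_{i=1}^n λᵢ xᵢ^{2d} ∈ Σ[x]_d} is nonempty. -/
/-!
Write `Θ = 1 + ∑ xᵢ^{2d}`. The multiplier `N = ‖f‖₁` works: a monomial `x^α` of degree at most `2d`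
is a product `x^β x^γ` of monomials of degree at most `d`, and
`|c| (x^{2β} + x^{2γ}) + 2 c x^α = |c| (x^β ± x^γ)²` with the sign of `c`, so it suffices that
`Θ - x^{2β}` is a sum of squares. Homogenizing by an extra variable equal to `1`, this follows from
the weighted AM-GM inequality `∑ βᵢ uᵢ^{2T} - T ∏ uᵢ^{2βᵢ} ≥ 0`, `T = ∑ βᵢ`, which has a
sum-of-squares certificate: adjoining one factor at a time reduces it to two variables, where the
difference is a sum of terms `m² (u² - v²) (u^{2k} - v^{2k})`, and `u² - v²` divides the last factor
with a quotient that is a sum of squares.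
-/

open MvPolynomial Finset

section Cone

variable {n d e : ℕ} {p q : MvPolynomial (Fin n) ℝ}

namespace IsSOS

lemma zero : IsSOS d (0 : MvPolynomial (Fin n) ℝ) :=
  ⟨0, Fin.elim0, fun i => i.elim0, by simp⟩

lemma sq (hp : p.totalDegree ≤ d) : IsSOS d (p ^ 2) :=
  ⟨1, fun _ => p, fun _ => hp, by simp⟩

lemma add (hp : IsSOS d p) (hq : IsSOS d q) : IsSOS d (p + q) := by
  obtain ⟨k, g, hg, rfl⟩ := hp
  obtain ⟨l, h, hh, rfl⟩ := hq
  refine ⟨k + l, Fin.append g h, Fin.addCases ?_ ?_, by simp [Fin.sum_univ_add]⟩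
  · simpa using hg
  · simpa using hh

lemma sum {ι : Type*} {s : Finset ι} {g : ι → MvPolynomial (Fin n) ℝ}
    (h : ∀ i ∈ s, IsSOS d (g i)) : IsSOS d (∑ i ∈ s, g i) :=
  Finset.sum_induction g (IsSOS d) (fun _ _ => add) zero h

lemma sq_mul (hq : q.totalDegree ≤ e) (hp : IsSOS d p) : IsSOS (e + d) (q ^ 2 * p) := by
  obtain ⟨k, h, hh, rfl⟩ := hp
  refine ⟨k, fun i => q * h i, fun i => ?_, ?_⟩
  · exact (totalDegree_mul _ _).trans (add_le_add hq (hh i))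
  · simp only [Finset.mul_sum, mul_pow]

lemma smul {c : ℝ} (hc : 0 ≤ c) (hp : IsSOS d p) : IsSOS d (c • p) := by
  have hsq : C c = (C √c : MvPolynomial (Fin n) ℝ) ^ 2 := by rw [← C_pow, Real.sq_sqrt hc]
  simpa only [smul_eq_C_mul, hsq, zero_add] using sq_mul (totalDegree_C √c).le hp

lemma nsmul (k : ℕ) (hp : IsSOS d p) : IsSOS d (k • p) := by
  simpa only [Nat.cast_smul_eq_nsmul] using smul k.cast_nonneg hp

lemma of_nsmul {k : ℕ} (hk : k ≠ 0) (hp : IsSOS d (k • p)) : IsSOS d p := by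
  rw [← Nat.cast_smul_eq_nsmul ℝ] at hp
  simpa only [inv_smul_smul₀ (Nat.cast_ne_zero.2 hk : (k : ℝ) ≠ 0)] using
    smul (inv_nonneg.2 k.cast_nonneg) hp

end IsSOS

end Cone

section AMGM

lemma weighted_pow_sub_mul_pow_eq_sum {R : Type*} [CommRing R] (x y : R) (a b : ℕ) :
    a • x ^ (a + b) + b • y ^ (a + b) - (a + b) • (x ^ a * y ^ b) =
      ∑ i ∈ range a, ∑ j ∈ range b, x ^ (a - 1 - i) * y ^ (b - 1 - j) *
        ((x - y) * (x ^ (i + j + 1) - y ^ (i + j + 1))) := by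
  have hterm : ∀ i ∈ range a, ∀ j ∈ range b,
      x ^ (a - 1 - i) * y ^ (b - 1 - j) * ((x - y) * (x ^ (i + j + 1) - y ^ (i + j + 1))) =
        x ^ a * ((x - y) * (x ^ j * y ^ (b - 1 - j))) +
          y ^ b * ((y - x) * (y ^ i * x ^ (a - 1 - i))) := by
    intro i hi j hj
    obtain ⟨k, rfl⟩ := Nat.exists_eq_add_of_lt (mem_range.1 hi)
    obtain ⟨l, rfl⟩ := Nat.exists_eq_add_of_lt (mem_range.1 hj)
    rw [show i + k + 1 - 1 - i = k by omega, show j + l + 1 - 1 - j = l by omega]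
    ring
  rw [sum_congr rfl fun i hi => sum_congr rfl (hterm i hi)]
  simp only [sum_add_distrib, sum_const, card_range, ← smul_sum, ← mul_sum,
    (Commute.all x y).mul_geom_sum₂, (Commute.all y x).mul_geom_sum₂]
  ring

variable {n e : ℕ} {u v : MvPolynomial (Fin n) ℝ}

lemma totalDegree_pow_le_mul (hu : u.totalDegree ≤ e) (a : ℕ) : (u ^ a).totalDegree ≤ e * a :=
  (totalDegree_pow u a).trans (by rw [mul_comm]; gcongr)

lemma totalDegree_pow_mul_pow_le (hu : u.totalDegree ≤ e) (hv : v.totalDegree ≤ e) (a b : ℕ) :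
    (u ^ a * v ^ b).totalDegree ≤ e * (a + b) := by
  rw [mul_add]
  exact (totalDegree_mul _ _).trans
    (add_le_add (totalDegree_pow_le_mul hu a) (totalDegree_pow_le_mul hv b))

lemma isSOS_sq_sub_sq_mul_pow_sub_pow (hu : u.totalDegree ≤ e) (hv : v.totalDegree ≤ e) (k : ℕ) :
    IsSOS (e * (k + 1)) ((u ^ 2 - v ^ 2) * ((u ^ 2) ^ k - (v ^ 2) ^ k)) := by
  have hsum : (u ^ 2 - v ^ 2) * ((u ^ 2) ^ k - (v ^ 2) ^ k) =
      ∑ i ∈ range k, ((u ^ 2 - v ^ 2) * (u ^ i * v ^ (k - 1 - i))) ^ 2 := by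
    rw [← (Commute.all (u ^ 2) (v ^ 2)).mul_geom_sum₂, mul_sum, mul_sum]
    exact sum_congr rfl fun i _ => by ring
  rw [hsum]
  refine IsSOS.sum fun i hi => IsSOS.sq ?_
  have hdiff : (u ^ 2 - v ^ 2).totalDegree ≤ e * 2 :=
    (totalDegree_sub _ _).trans
      (max_le (totalDegree_pow_le_mul hu 2) (totalDegree_pow_le_mul hv 2))
  have hexp : k + 1 = 2 + (i + (k - 1 - i)) := by have := mem_range.1 hi; omega
  rw [hexp, mul_add]
  exact (totalDegree_mul _ _).trans (add_le_add hdiff (totalDegree_pow_mul_pow_le hu hv _ _))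

lemma isSOS_amgm_two (hu : u.totalDegree ≤ e) (hv : v.totalDegree ≤ e) (a b : ℕ) :
    IsSOS (e * (a + b)) (a • u ^ (2 * (a + b)) + b • v ^ (2 * (a + b)) -
      (a + b) • (u ^ (2 * a) * v ^ (2 * b))) := by
  simp only [pow_mul _ 2]
  rw [weighted_pow_sub_mul_pow_eq_sum]
  refine IsSOS.sum fun i hi => IsSOS.sum fun j hj => ?_
  have hexp : a + b = a - 1 - i + (b - 1 - j) + (i + j + 1 + 1) := by
    have := mem_range.1 hi
    have := mem_range.1 hj
    omega
  rw [hexp, mul_add, pow_right_comm u, pow_right_comm v, ← mul_pow]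
  exact (isSOS_sq_sub_sq_mul_pow_sub_pow hu hv _).sq_mul (totalDegree_pow_mul_pow_le hu hv _ _)

theorem isSOS_amgm {ι : Type*} (s : Finset ι) (β : ι → ℕ) {u : ι → MvPolynomial (Fin n) ℝ}
    (hu : ∀ i ∈ s, (u i).totalDegree ≤ e) :
    IsSOS (e * ∑ i ∈ s, β i) (∑ i ∈ s, β i • u i ^ (2 * ∑ i ∈ s, β i) -
      (∑ i ∈ s, β i) • ∏ i ∈ s, u i ^ (2 * β i)) := by
  classical
  induction s using Finset.induction_on with
  | empty => simpa using IsSOS.zero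
  | insert j s hj ih =>
    obtain ⟨huj, hus⟩ := forall_mem_insert _ _ _ |>.1 hu
    specialize ih hus
    rw [sum_insert hj, sum_insert hj, prod_insert hj]
    set B := ∑ i ∈ s, β i with hB
    rcases eq_or_ne B 0 with hB0 | hB0
    · have hβ : ∀ i ∈ s, β i = 0 := sum_eq_zero_iff.1 hB0
      have hprod : ∏ i ∈ s, u i ^ (2 * β i) = 1 := prod_eq_one fun i hi => by simp [hβ i hi]
      have hsum : ∑ i ∈ s, β i • u i ^ (2 * (β j + B)) = 0 :=
        sum_eq_zero fun i hi => by simp [hβ i hi]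
      rw [hprod, hsum, hB0]
      simpa using IsSOS.zero
    · have htwo : IsSOS (e * (β j + B)) (∑ i ∈ s, β i • (β j • u j ^ (2 * (β j + B)) +
          B • u i ^ (2 * (β j + B)) - (β j + B) • (u j ^ (2 * β j) * u i ^ (2 * B)))) :=
        IsSOS.sum fun i hi => (isSOS_amgm_two huj (hus i hi) (β j) B).nsmul (β i)
      have hind := (ih.sq_mul (totalDegree_pow_le_mul huj (β j))).nsmul (β j + B)
      rw [← mul_add] at hind
      refine IsSOS.of_nsmul hB0 ?_
      convert htwo.add hind using 1
      simp only [smul_sub, smul_add, sum_sub_distrib, sum_add_distrib, ← sum_smul, ← hB,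
        smul_comm (β _) B, smul_comm (β _) (β j + B), ← mul_smul_comm, ← smul_sum, ← mul_sum]
      ring

end AMGM

section Monomials

variable {n d : ℕ}

lemma isSOS_one_add_sum_sub_monomial_sq (hd : 1 ≤ d) {β : Fin n →₀ ℕ} (hβ : β.degree ≤ d) :
    IsSOS d (1 + ∑ i : Fin n, X i ^ (2 * d) - monomial β (1 : ℝ) ^ 2) := by
  set β' : Option (Fin n) → ℕ := fun o => o.elim (d - β.degree) β with hβ'
  set u : Option (Fin n) → MvPolynomial (Fin n) ℝ := fun o => o.elim 1 X with hu
  have hsum : ∑ o, β' o = d := by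
    simp [hβ', Fintype.sum_option, ← Finsupp.degree_eq_sum, hβ]
  have hprod : ∏ o, u o ^ (2 * β' o) = monomial β (1 : ℝ) ^ 2 := by
    simp [hβ', hu, Fintype.prod_option, monomial_eq, Finsupp.prod_fintype, ← prod_pow, ← pow_mul,
      mul_comm]
  have hβd : ∀ o, β' o ≤ d := fun o => hsum ▸ single_le_sum (fun _ _ => zero_le) (mem_univ o)
  have hamgm : IsSOS d (∑ o, β' o • u o ^ (2 * d) - d • monomial β (1 : ℝ) ^ 2) := by
    have hdeg : ∀ o ∈ univ, (u o).totalDegree ≤ 1 := by rintro (_ | i) - <;> simp [hu]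
    simpa only [hsum, hprod, one_mul] using isSOS_amgm univ β' hdeg
  have hrest : IsSOS d (∑ o, (d - β' o) • u o ^ (2 * d)) := IsSOS.sum fun o _ => by
    have hdeg : (u o ^ d).totalDegree ≤ d := by cases o <;> simp [hu, totalDegree_X_pow]
    simpa only [← pow_mul, mul_comm d 2] using (IsSOS.sq hdeg).nsmul (d - β' o)
  refine IsSOS.of_nsmul (Nat.one_le_iff_ne_zero.1 hd) ?_
  convert hrest.add hamgm using 1
  rw [← add_sub_assoc, ← sum_add_distrib]
  simp only [← add_smul, Nat.sub_add_cancel (hβd _), ← smul_sum, ← smul_sub]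
  simp [hu, Fintype.sum_option]

lemma exists_add_eq_degree_le {σ : Type*} {α : σ →₀ ℕ} {k l : ℕ} (hα : α.degree ≤ k + l) :
    ∃ β γ : σ →₀ ℕ, β + γ = α ∧ β.degree ≤ k ∧ γ.degree ≤ l := by
  obtain ⟨β, hle, hβ⟩ := Finsupp.exists_le_degree_eq α (min k α.degree) (min_le_right _ _)
  obtain ⟨γ, rfl⟩ := exists_add_of_le hle
  rw [map_add] at hα hβ
  exact ⟨β, γ, rfl, by omega, by omega⟩

lemma isSOS_abs_mul_add_monomial (hd : 1 ≤ d) {α : Fin n →₀ ℕ} (hα : α.degree ≤ 2 * d) (c : ℝ) :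
    IsSOS d (C |c| * (1 + ∑ i : Fin n, X i ^ (2 * d)) + monomial α c) := by
  obtain ⟨β, γ, rfl, hβ, hγ⟩ := exists_add_eq_degree_le (two_mul d ▸ hα)
  obtain ⟨ε, hε, hc⟩ : ∃ ε : ℝ, ε ^ 2 = 1 ∧ c = |c| * ε := by
    rcases abs_choice c with h | h
    · exact ⟨1, by norm_num, by simp [h]⟩
    · exact ⟨-1, by norm_num, by simp [h]⟩
  have hdeg : ∀ {δ : Fin n →₀ ℕ} (r : ℝ), δ.degree ≤ d → (monomial δ r).totalDegree ≤ d :=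
    fun r hδ => (totalDegree_monomial_le _ r).trans hδ
  have hsq : IsSOS d ((monomial β 1 + monomial γ ε) ^ 2) :=
    IsSOS.sq ((totalDegree_add _ _).trans (max_le (hdeg 1 hβ) (hdeg ε hγ)))
  have hsos := ((isSOS_one_add_sum_sub_monomial_sq hd hβ).add
    (isSOS_one_add_sum_sub_monomial_sq hd hγ)).add hsq
  convert hsos.smul (c := |c| / 2) (by positivity) using 1
  have hmul : monomial (β + γ) c = C |c| * (monomial β 1 * monomial γ ε) := by
    rw [monomial_mul, one_mul, C_mul_monomial, ← hc]
  have hγsq : monomial γ ε ^ 2 = monomial γ (1 : ℝ) ^ 2 := by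
    rw [monomial_pow, monomial_pow, hε, one_pow]
  have hhalf : C |c| = C (|c| / 2) * (2 : MvPolynomial (Fin n) ℝ) := by
    rw [← map_ofNat C 2, ← C_mul, div_mul_cancel₀ _ two_ne_zero]
  rw [hmul, hhalf, smul_eq_C_mul, add_sq, hγsq]
  ring

theorem isSOS_add_l1Norm_mul (hd : 1 ≤ d) {f : MvPolynomial (Fin n) ℝ}
    (hf : f.totalDegree ≤ 2 * d) :
    IsSOS d (f + C (l1Norm f) * (1 + ∑ i : Fin n, X i ^ (2 * d))) := by
  have hterms : IsSOS d (∑ α ∈ f.support, (C |f.coeff α| * (1 + ∑ i : Fin n, X i ^ (2 * d)) +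
      monomial α (f.coeff α))) :=
    IsSOS.sum fun α hα => isSOS_abs_mul_add_monomial hd ((le_totalDegree hα).trans hf) _
  rwa [sum_add_distrib, ← sum_mul, ← map_sum, support_sum_monomial_coeff, add_comm] at hterms

end Monomials

/-- For every `f` with `deg f ≤ 2d` there is `N ≥ 0` such that
`f + N(1 + ∑ᵢ xᵢ^{2d})` is a sum of squares of polynomials of degree at most `d`;
in particular the feasible set of the semidefinite program (7) is nonempty. -/
theorem feasible_set_nonempty {n d : ℕ} (hd : 1 ≤ d) (f : MvPolynomial (Fin n) ℝ)
    (hf : f.totalDegree ≤ 2 * d) :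
    (∃ N : ℝ, 0 ≤ N ∧ IsSOS d (f + C N * (1 + ∑ i : Fin n, X i ^ (2 * d)))) ∧
    {l : Fin (n + 1) → ℝ | (∀ i, 0 ≤ l i) ∧
      IsSOS d (f + C (l 0) + ∑ i : Fin n, C (l i.succ) * X i ^ (2 * d))}.Nonempty := by
  have hN : 0 ≤ l1Norm f := sum_nonneg fun α _ => abs_nonneg (f.coeff α)
  have hSOS := isSOS_add_l1Norm_mul hd hf
  refine ⟨⟨l1Norm f, hN, hSOS⟩, fun _ => l1Norm f, fun _ => hN, ?_⟩
  simpa only [mul_add, mul_one, mul_sum, add_assoc] using hSOS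
end

section
/- The polynomial f(x₁, x₂) = x₁²x₂²(x₁² + x₂² − 1) + 1/27 is nonnegative on ℝ²: f(x₁, x₂) ≥ 0 for all (x₁, x₂) ∈ ℝ². -/
/-!
With `a = x₁²`, `b = x₂²` and `c = 1 - a - b`, the claim reads `27abc ≤ (a + b + c)³`. This is the
AM-GM inequality if `c` is nonnegative; if `c` is negative, the left side is nonpositive and the
right side is `1`.
-/

section LinearOrderedCommRing

variable {R : Type*} [CommRing R] [LinearOrder R] [IsStrictOrderedRing R]

theorem twentySeven_mul_sq_mul_le_four_mul_add_pow_three {t c : R} (h : 0 ≤ 4 * t + c) :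
    27 * (t ^ 2 * c) ≤ 4 * (t + c) ^ 3 := by
  have factorization : 4 * (t + c) ^ 3 - 27 * (t ^ 2 * c) = (t - 2 * c) ^ 2 * (4 * t + c) := by
    ring
  rw [← sub_nonneg, factorization]
  exact mul_nonneg (sq_nonneg _) h

theorem twentySeven_mul_le_add_pow_three {a b c : R} (ha : 0 ≤ a) (hb : 0 ≤ b)
    (habc : 0 ≤ a + b + c) : 27 * (a * b * c) ≤ (a + b + c) ^ 3 := by
  rcases le_total 0 c with hc | hc
  · refine le_of_mul_le_mul_left ?_ (four_pos (α := R))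
    calc
      4 * (27 * (a * b * c)) = 27 * (4 * a * b * c) := by ring
      _ ≤ 27 * ((a + b) ^ 2 * c) := by gcongr; exact four_mul_le_sq_add a b
      _ ≤ 4 * (a + b + c) ^ 3 :=
        twentySeven_mul_sq_mul_le_four_mul_add_pow_three (by positivity)
  · calc
      27 * (a * b * c) ≤ 0 :=
        mul_nonpos_of_nonneg_of_nonpos (by norm_num)
          (mul_nonpos_of_nonneg_of_nonpos (mul_nonneg ha hb) hc)
      _ ≤ (a + b + c) ^ 3 := pow_nonneg habc 3

end LinearOrderedCommRing

theorem motzkin_like_nonneg_general {K : Type*} [Field K] [LinearOrder K] [IsStrictOrderedRing K]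
    (x₁ x₂ : K) : 0 ≤ x₁ ^ 2 * x₂ ^ 2 * (x₁ ^ 2 + x₂ ^ 2 - 1) + 1 / 27 := by
  have sum_eq_one : x₁ ^ 2 + x₂ ^ 2 + (1 - x₁ ^ 2 - x₂ ^ 2) = 1 := by ring
  have amgm : 27 * (x₁ ^ 2 * x₂ ^ 2 * (1 - x₁ ^ 2 - x₂ ^ 2)) ≤ 1 := by
    simpa only [sum_eq_one, one_pow] using
      twentySeven_mul_le_add_pow_three (sq_nonneg x₁) (sq_nonneg x₂)
        (zero_le_one.trans_eq sum_eq_one.symm)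
  linarith

/-- The Motzkin-like polynomial `f(x₁,x₂) = x₁²x₂²(x₁² + x₂² - 1) + 1/27` is
nonnegative on `ℝ²`. -/
theorem motzkin_like_nonneg (x₁ x₂ : ℝ) :
    0 ≤ x₁ ^ 2 * x₂ ^ 2 * (x₁ ^ 2 + x₂ ^ 2 - 1) + 1 / 27 :=
  motzkin_like_nonneg_general x₁ x₂
end

section
/- The polynomial f(x₁, x₂) = x₁²x₂²(x₁² + x₂² − 1) + 1/27 is not a sum of squares of polynomials: there exist no polynomials h₁, …, h_k ∈ ℝ[x₁, x₂] with f = h₁² + ⋯ + h_k². -/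
open MvPolynomial

/-!
Suppose `f = ∑ hᵢ²`. The vertices of the Newton polytope of the `hᵢ` cannot cancel in `∑ hᵢ²`, so
every half-plane `w ≤ 2d` containing the exponents of `f` gives a half-plane `w ≤ d` containing
those of each `hᵢ` (Reznick). Hence the exponents of `hᵢ` lie in the triangle with vertices
`(0, 0)`, `(2, 1)`, `(1, 2)`, in which `(2, 2)` is a sum of two lattice points only as
`(1, 1) + (1, 1)`. The coefficient `-1` of `x₁²x₂²` would then be a sum of squares.
-/

theorem eq_zero_of_sum_sq_eq_zero {ι R : Type*} [CommSemiring R] [IsFormallyReal R]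
    {s : Finset ι} {a : ι → R} (h : ∑ i ∈ s, a i ^ 2 = 0) {i : ι} (hi : i ∈ s) : a i = 0 := by
  classical
  rw [← Finset.add_sum_erase s _ hi] at h
  have hsq : a i * a i = 0 := by
    rw [← sq]
    exact IsFormallyReal.eq_zero_of_add_right (sq (a i) ▸ IsSumSq.mul_self _)
      (IsSumSq.sum_sq _ _) h
  by_contra ha
  exact IsFormallyReal.not_isSumNonzeroSq_zero (hsq ▸ IsSumNonzeroSq.sq ha)

theorem uniqueAdd_self_of_forall_le {A M F : Type*} [Add A] [Add M] [LinearOrder M]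
    [AddLeftStrictMono M] [AddRightStrictMono M] [FunLike F A M] [AddHomClass F A M] {φ : F}
    (hφ : Function.Injective φ) {S : Finset A} {m : A} (hm : ∀ e ∈ S, φ e ≤ φ m) :
    UniqueAdd S S m m := fun a b ha hb hab ↦
  ((add_eq_add_iff_eq_and_eq (hm a ha) (hm b hb)).1 <| by
    rw [← map_add, hab, map_add]).imp (@hφ _ _) (@hφ _ _)

section NewtonPolytope

variable {σ ι R : Type*} [CommSemiring R] {s : Finset ι} {h : ι → MvPolynomial σ R}

theorem coeff_add_self_sum_sq_of_uniqueAdd {m : σ →₀ ℕ}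
    (hm : ∀ i ∈ s, UniqueAdd (h i).support (h i).support m m) :
    coeff (m + m) (∑ i ∈ s, h i ^ 2) = ∑ i ∈ s, coeff m (h i) ^ 2 := by
  simp only [coeff_sum, sq]
  exact Finset.sum_congr rfl fun i hi ↦ AddMonoidAlgebra.coeff_mul_add_of_uniqueAdd (hm i hi)

variable [IsFormallyReal R] {M : Type*} [AddCommMonoid M] [LinearOrder M]
  [IsOrderedCancelAddMonoid M]

theorem add_self_mem_support_sum_sq {φ : (σ →₀ ℕ) →+ M} (hφ : Function.Injective φ) {m : σ →₀ ℕ}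
    (hmax : ∀ i ∈ s, ∀ e ∈ (h i).support, φ e ≤ φ m) {i : ι} (hi : i ∈ s)
    (hm : m ∈ (h i).support) : m + m ∈ (∑ i ∈ s, h i ^ 2).support := by
  rw [mem_support_iff, coeff_add_self_sum_sq_of_uniqueAdd
    fun j hj ↦ uniqueAdd_self_of_forall_le hφ (hmax j hj)]
  exact fun hzero ↦ mem_support_iff.1 hm (eq_zero_of_sum_sq_eq_zero hzero hi)

theorem le_of_mem_support_of_sum_sq (w : (σ →₀ ℕ) →+ M) {d : M}
    (hd : ∀ e ∈ (∑ i ∈ s, h i ^ 2).support, w e ≤ d + d) {i : ι} (hi : i ∈ s) {e : σ →₀ ℕ}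
    (he : e ∈ (h i).support) : w e ≤ d := by
  classical
  obtain ⟨_, _⟩ := exists_wellFoundedGT σ
  -- Breaking ties of `w` lexicographically singles out a vertex of the face where `w` is maximal.
  let φ : (σ →₀ ℕ) →+ M ×ₗ Lex (σ →₀ ℕ) :=
    { toFun := fun e ↦ toLex (w e, toLex e)
      map_zero' := by rw [map_zero]; rfl
      map_add' := fun a b ↦ by rw [map_add]; rfl }
  have hφ : Function.Injective φ := fun a b hab ↦
    toLex.injective (Prod.ext_iff.1 (toLex.injective hab)).2
  obtain ⟨m, hm, hmax⟩ := (s.biUnion fun i ↦ (h i).support).exists_max_image φ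
    ⟨e, Finset.mem_biUnion.2 ⟨i, hi, he⟩⟩
  replace hmax : ∀ j ∈ s, ∀ e ∈ (h j).support, φ e ≤ φ m := fun j hj e he ↦
    hmax e (Finset.mem_biUnion.2 ⟨j, hj, he⟩)
  obtain ⟨j, hj, hmj⟩ := Finset.mem_biUnion.1 hm
  have hwm : w m + w m ≤ d + d :=
    map_add w m m ▸ hd _ (add_self_mem_support_sum_sq hφ hmax hj hmj)
  calc
    w e ≤ w m := Prod.Lex.monotone_fst _ _ (hmax i hi e he)
    _ ≤ d := le_of_not_gt fun hlt ↦ (add_lt_add hlt hlt).not_ge hwm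

end NewtonPolytope

/-- The exponents in the `n`-fold dilate of the triangle with vertices `(0, 0)`, `(2, 1)` and
`(1, 2)`, cut out by its three edges; the two-fold dilate is the Newton polytope of
`x₁²x₂²(x₁² + x₂² - 1) + c` for `c ≠ 0`. -/
def motzkinTriangle (n : ℕ) : Set (Fin 2 →₀ ℕ) :=
  {e | e 0 + e 1 ≤ 3 * n ∧ e 0 ≤ 2 * e 1 ∧ e 1 ≤ 2 * e 0}

theorem mem_motzkinTriangle {n : ℕ} {e : Fin 2 →₀ ℕ} :
    e ∈ motzkinTriangle n ↔ e 0 + e 1 ≤ 3 * n ∧ e 0 ≤ 2 * e 1 ∧ e 1 ≤ 2 * e 0 :=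
  Iff.rfl

theorem uniqueAdd_one_one_of_subset_motzkinTriangle {S T : Finset (Fin 2 →₀ ℕ)}
    (hS : (S : Set (Fin 2 →₀ ℕ)) ⊆ motzkinTriangle 1)
    (hT : (T : Set (Fin 2 →₀ ℕ)) ⊆ motzkinTriangle 1) :
    UniqueAdd S T (Finsupp.equivFunOnFinite.symm 1) (Finsupp.equivFunOnFinite.symm 1) := by
  intro a b ha hb hab
  have hab0 : a 0 + b 0 = 2 := DFunLike.congr_fun hab 0
  have hab1 : a 1 + b 1 = 2 := DFunLike.congr_fun hab 1
  have haT := mem_motzkinTriangle.1 (hS ha)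
  have hbT := mem_motzkinTriangle.1 (hT hb)
  simp only [Finsupp.ext_iff, Fin.forall_fin_two, Finsupp.equivFunOnFinite_symm_apply_apply,
    Pi.one_apply]
  omega

section MotzkinLike

variable {ι R : Type*} [CommRing R]

/-- The Motzkin-like polynomial `x₁²x₂²(x₁² + x₂² - 1) + c`, over any commutative ring and with
an arbitrary constant term `c`; the indices `0` and `1` stand for `x₁` and `x₂`. -/
noncomputable def motzkinLike (c : R) : MvPolynomial (Fin 2) R :=
  (X 0) ^ 2 * (X 1) ^ 2 * ((X 0) ^ 2 + (X 1) ^ 2 - 1) + C c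

theorem coeff_motzkinLike (c : R) (e : Fin 2 →₀ ℕ) :
    coeff e (motzkinLike c) =
      (if e 0 = 4 ∧ e 1 = 2 then 1 else 0) + (if e 0 = 2 ∧ e 1 = 4 then 1 else 0)
        - (if e 0 = 2 ∧ e 1 = 2 then 1 else 0) + (if e 0 = 0 ∧ e 1 = 0 then c else 0) := by
  have hexp (a b : ℕ) (r : R) : coeff e (C r * (X 0 ^ a * X 1 ^ b)) =
      if e 0 = a ∧ e 1 = b then r else 0 := by
    simp [X_pow_eq_monomial, monomial_mul, coeff_C_mul, coeff_monomial, Finsupp.ext_iff,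
      Fin.forall_fin_two, eq_comm]
  have hsum : motzkinLike c = C 1 * (X 0 ^ 4 * X 1 ^ 2) + C 1 * (X 0 ^ 2 * X 1 ^ 4)
      - C 1 * (X 0 ^ 2 * X 1 ^ 2) + C c * (X 0 ^ 0 * X 1 ^ 0) := by
    rw [motzkinLike, C_1]
    ring
  simp only [hsum, coeff_add, coeff_sub, hexp]

theorem support_motzkinLike_subset (c : R) :
    ((motzkinLike c).support : Set (Fin 2 →₀ ℕ)) ⊆ motzkinTriangle 2 := by
  intro e he
  rw [Finset.mem_coe, mem_support_iff, coeff_motzkinLike] at he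
  rw [mem_motzkinTriangle]
  by_contra hout
  apply he
  rw [if_neg, if_neg, if_neg, if_neg]
  · simp
  all_goals omega

variable [IsFormallyReal R]

theorem support_subset_of_motzkinLike_eq_sum_sq {c : R} {s : Finset ι}
    {h : ι → MvPolynomial (Fin 2) R} (H : motzkinLike c = ∑ i ∈ s, h i ^ 2) {i : ι} (hi : i ∈ s) :
    ((h i).support : Set (Fin 2 →₀ ℕ)) ⊆ motzkinTriangle 1 := by
  intro e he
  have half_plane (a b d : ℤ)
      (hd : ∀ e ∈ motzkinTriangle 2, e 0 * a + e 1 * b ≤ d + d) : e 0 * a + e 1 * b ≤ d := by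
    have hw (e : Fin 2 →₀ ℕ) : Finsupp.weight ![a, b] e = e 0 * a + e 1 * b := by
      simp [Finsupp.weight_apply, Finsupp.sum_fintype]
    rw [← hw]
    refine le_of_mem_support_of_sum_sq (Finsupp.weight ![a, b]) (fun e he ↦ ?_) hi he
    rw [hw]
    exact hd e (support_motzkinLike_subset c (H ▸ he))
  have hsum := half_plane 1 1 3 fun e he ↦ by rw [mem_motzkinTriangle] at he; omega
  have hfst := half_plane 1 (-2) 0 fun e he ↦ by rw [mem_motzkinTriangle] at he; omega
  have hsnd := half_plane (-2) 1 0 fun e he ↦ by rw [mem_motzkinTriangle] at he; omega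
  rw [mem_motzkinTriangle]
  omega

theorem motzkin_like_not_sos_general [Nontrivial R] (c : R) (s : Finset ι)
    (h : ι → MvPolynomial (Fin 2) R) : motzkinLike c ≠ ∑ i ∈ s, h i ^ 2 := by
  intro H
  let m : Fin 2 →₀ ℕ := Finsupp.equivFunOnFinite.symm 1
  have hm (i : ι) (hi : i ∈ s) : UniqueAdd (h i).support (h i).support m m :=
    have hsub := support_subset_of_motzkinLike_eq_sum_sq H hi
    uniqueAdd_one_one_of_subset_motzkinTriangle hsub hsub
  have hcoeff : -1 = ∑ i ∈ s, coeff m (h i) ^ 2 := by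
    rw [← coeff_add_self_sum_sq_of_uniqueAdd hm, ← H, coeff_motzkinLike]
    simp [m]
  have hneg : IsSumSq (-1 : R) := hcoeff ▸ IsSumSq.sum_sq _ _
  exact one_ne_zero (IsFormallyReal.eq_zero_of_isSumSq_of_neg_isSumSq IsSumSq.one hneg)

end MotzkinLike

/-- The Motzkin-like polynomial `f(x₁,x₂) = x₁²x₂²(x₁² + x₂² - 1) + 1/27` is not a sum
of squares of polynomials. -/
theorem motzkin_like_not_sos :
    ¬ ∃ (k : ℕ) (h : Fin k → MvPolynomial (Fin 2) ℝ),
      (X 0) ^ 2 * (X 1) ^ 2 * ((X 0) ^ 2 + (X 1) ^ 2 - 1) + C (1 / 27) =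
        ∑ i, (h i) ^ 2 :=
  fun ⟨_, h, H⟩ ↦ motzkin_like_not_sos_general (1 / 27) Finset.univ h H
end

section
/- The polynomial f(x₁, x₂) = x₁²x₂²(x₁² + x₂² − 1) + 1/27 has global minimum value 0 over ℝ², attained exactly at the four points (x₁, x₂) = (±(1/3)^{1/2}, ±(1/3)^{1/2}); that is, f ≥ 0 on ℝ² and f(x₁, x₂) = 0 if and only if x₁² = 1/3 and x₂² = 1/3. -/
/-!
With `a = x₁²`, `b = x₂²` and `c = 1/3`, the polynomial is Motzkin's form `a²b + ab² + c³ - 3abc`.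
The cube of `abc` is the product of the three nonnegative terms `a²b`, `ab²` and `c³`, so the form
is nonnegative by the AM-GM inequality, and it vanishes exactly when these terms are equal, that is,
when `a = b = c`.
-/

section ArithmeticGeometricMean

variable {R : Type*} [CommRing R]

theorem two_mul_add_add_pow_three_sub (a b c : R) :
    2 * ((a + b + c) ^ 3 - 27 * (a * b * c)) =
      (a + b + c + 6 * a) * (b - c) ^ 2 + (a + b + c + 6 * b) * (c - a) ^ 2 +
        (a + b + c + 6 * c) * (a - b) ^ 2 := by
  ring

variable [LinearOrder R] [IsStrictOrderedRing R] {a b c : R}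

theorem twentySeven_mul_le_add_add_pow_three (ha : 0 ≤ a) (hb : 0 ≤ b) (hc : 0 ≤ c) :
    27 * (a * b * c) ≤ (a + b + c) ^ 3 := by
  have h : 0 ≤ 2 * ((a + b + c) ^ 3 - 27 * (a * b * c)) := by
    rw [two_mul_add_add_pow_three_sub]
    positivity
  linarith

theorem twentySeven_mul_eq_add_add_pow_three_iff (ha : 0 ≤ a) (hb : 0 ≤ b) (hc : 0 ≤ c) :
    27 * (a * b * c) = (a + b + c) ^ 3 ↔ a = b ∧ b = c := by
  constructor
  · intro h
    rcases (by positivity : 0 ≤ a + b + c).eq_or_lt with hs | hs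
    · constructor <;> linarith
    · have key := two_mul_add_add_pow_three_sub a b c
      rw [h, sub_self, mul_zero, eq_comm,
        add_eq_zero_iff_of_nonneg (by positivity) (by positivity),
        add_eq_zero_iff_of_nonneg (by positivity) (by positivity)] at key
      obtain ⟨⟨hbc, -⟩, hab⟩ := key
      have eq_of_mul_sq {w x y : R} (hw : 0 ≤ w) (h : (a + b + c + 6 * w) * (x - y) ^ 2 = 0) :
          x = y := by
        have : a + b + c + 6 * w ≠ 0 := by positivity
        simpa [this, sub_eq_zero] using h
      exact ⟨eq_of_mul_sq hc hab, eq_of_mul_sq ha hbc⟩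
  · rintro ⟨rfl, rfl⟩
    ring

end ArithmeticGeometricMean

section MotzkinForm

variable {R : Type*} [CommRing R]

theorem three_mul_pow_three_eq (a b c : R) :
    (3 * (a * b * c)) ^ 3 = 27 * (a ^ 2 * b * (a * b ^ 2) * c ^ 3) := by
  ring

variable [LinearOrder R] [IsStrictOrderedRing R] {a b c : R}

theorem three_mul_le_sq_mul_add_mul_sq_add_pow_three (ha : 0 ≤ a) (hb : 0 ≤ b) (hc : 0 ≤ c) :
    3 * (a * b * c) ≤ a ^ 2 * b + a * b ^ 2 + c ^ 3 := by
  rw [← (by decide : Odd 3).pow_le_pow, three_mul_pow_three_eq]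
  exact twentySeven_mul_le_add_add_pow_three (by positivity) (by positivity) (by positivity)

theorem sq_mul_eq_mul_sq_eq_pow_three_iff (hc : c ≠ 0) :
    a ^ 2 * b = a * b ^ 2 ∧ a * b ^ 2 = c ^ 3 ↔ a = c ∧ b = c := by
  constructor
  · rintro ⟨hab, hbc⟩
    have hne : a * b ≠ 0 := fun h ↦ pow_ne_zero 3 hc (by linear_combination b * h - hbc)
    obtain rfl : a = b := mul_right_cancel₀ hne (by linear_combination hab)
    have hac : a = c := (by decide : Odd 3).pow_inj.mp (by linear_combination hbc)
    exact ⟨hac, hac⟩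
  · rintro ⟨rfl, rfl⟩
    constructor <;> ring

theorem three_mul_eq_sq_mul_add_mul_sq_add_pow_three_iff
    (ha : 0 ≤ a) (hb : 0 ≤ b) (hc : 0 < c) :
    3 * (a * b * c) = a ^ 2 * b + a * b ^ 2 + c ^ 3 ↔ a = c ∧ b = c := by
  rw [← (by decide : Odd 3).pow_inj, three_mul_pow_three_eq,
    twentySeven_mul_eq_add_add_pow_three_iff (by positivity) (by positivity) (by positivity),
    sq_mul_eq_mul_sq_eq_pow_three_iff hc.ne']

end MotzkinForm

theorem motzkin_like_min_general {K : Type*} [Field K] [LinearOrder K] [IsStrictOrderedRing K]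
    {a b : K} (ha : 0 ≤ a) (hb : 0 ≤ b) :
    0 ≤ a * b * (a + b - 1) + 1 / 27 ∧
    (a * b * (a + b - 1) + 1 / 27 = 0 ↔ a = 1 / 3 ∧ b = 1 / 3) := by
  have motzkin_form : a * b * (a + b - 1) + 1 / 27 =
      a ^ 2 * b + a * b ^ 2 + (1 / 3) ^ 3 - 3 * (a * b * (1 / 3)) := by ring
  rw [motzkin_form, sub_nonneg, sub_eq_zero, eq_comm]
  exact ⟨three_mul_le_sq_mul_add_mul_sq_add_pow_three ha hb (by positivity),
    three_mul_eq_sq_mul_add_mul_sq_add_pow_three_iff ha hb (by positivity)⟩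

/-- The Motzkin-like polynomial `f(x₁,x₂) = x₁²x₂²(x₁² + x₂² - 1) + 1/27` has global
minimum `0` on `ℝ²`, attained exactly at the four points `(±(1/3)^{1/2}, ±(1/3)^{1/2})` :
`f ≥ 0` and `f(x₁,x₂) = 0 ↔ x₁² = 1/3 ∧ x₂² = 1/3`. -/
theorem motzkin_like_min (x₁ x₂ : ℝ) :
    0 ≤ x₁ ^ 2 * x₂ ^ 2 * (x₁ ^ 2 + x₂ ^ 2 - 1) + 1 / 27 ∧
    (x₁ ^ 2 * x₂ ^ 2 * (x₁ ^ 2 + x₂ ^ 2 - 1) + 1 / 27 = 0 ↔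
      x₁ ^ 2 = 1 / 3 ∧ x₂ ^ 2 = 1 / 3) :=
  motzkin_like_min_general (sq_nonneg x₁) (sq_nonneg x₂)
end
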